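/- Let 𝒞 be a finite constraint set over base type variables {τ_i}_{i ∈ I}, with Σ finite. Then for each i ∈ I, the language L_i = { w ∈ Σ* : 𝒞 ⊢ VAR τ_i.w } is a prefix-closed regular language over Σ; in particular, there exist sketches S_i (regular trees over Σ) such that w ∈ ℒ(S_i) if and only if 𝒞 ⊢ VAR τ_i.w. -/

import Mathlib

/-- The two-element sign monoid `{⊕, ⊖}` of variances. -/
inductive Sign : Type where
  | pos
  | neg
deriving DecidableEq, Repr

/-- Multiplication in the sign monoid (`⊕` is the identity, `⊖ · ⊖ = ⊕`). -/
def Sign.mul : Sign → Sign → Sign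
  | .pos, s => s
  | .neg, .pos => .neg
  | .neg, .neg => .pos

/-- Variance of a word in `Σ*`: `⟨ε⟩ = ⊕`, `⟨xw⟩ = ⟨x⟩·⟨w⟩`. -/
def wordSign {L : Type} (sgn : L → Sign) : List L → Sign
  | [] => .pos
  | x :: w => (sgn x).mul (wordSign sgn w)

/-- A derived type variable `α.w` with base type variable `α ∈ 𝒱` and word `w ∈ Σ*`. -/
structure DTV (V L : Type) : Type where
  base : V
  word : List L

/-- Appending a single field label to a derived type variable: `α.ℓ`. -/
def DTV.app {V L : Type} (α : DTV V L) (ℓ : L) : DTV V L :=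
  ⟨α.base, α.word ++ [ℓ]⟩

/-- A constraint: either `VAR X` or `X ⊑ Y` for derived type variables. -/
inductive Constraint (V L : Type) : Type where
  | var : DTV V L → Constraint V L
  | sub : DTV V L → DTV V L → Constraint V L

/-- Entailment `𝒞 ⊢ c`: the least relation containing `𝒞` and closed under the
deduction rules T-Left, T-Right, T-InheritL, T-InheritR, T-Prefix, S-Refl,
S-Trans, S-Field⊕, S-Field⊖ and S-Pointer. -/
inductive Entails {V L : Type} (sgn : L → Sign) (load store : L)
    (C : Set (Constraint V L)) : Constraint V L → Prop where
  | ax {c} : c ∈ C → Entails sgn load store C c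
  | tLeft {α β} : Entails sgn load store C (.sub α β) →
      Entails sgn load store C (.var α)
  | tRight {α β} : Entails sgn load store C (.sub α β) →
      Entails sgn load store C (.var β)
  | tInheritL {α β : DTV V L} {ℓ} : Entails sgn load store C (.sub α β) →
      Entails sgn load store C (.var (α.app ℓ)) →
      Entails sgn load store C (.var (β.app ℓ))
  | tInheritR {α β : DTV V L} {ℓ} : Entails sgn load store C (.sub α β) →
      Entails sgn load store C (.var (β.app ℓ)) →
      Entails sgn load store C (.var (α.app ℓ))
  | tPrefix {α : DTV V L} {ℓ} : Entails sgn load store C (.var (α.app ℓ)) →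
      Entails sgn load store C (.var α)
  | sRefl {α} : Entails sgn load store C (.var α) →
      Entails sgn load store C (.sub α α)
  | sTrans {α β γ} : Entails sgn load store C (.sub α β) →
      Entails sgn load store C (.sub β γ) →
      Entails sgn load store C (.sub α γ)
  | sFieldPos {α β : DTV V L} {ℓ} : Entails sgn load store C (.sub α β) →
      Entails sgn load store C (.var (β.app ℓ)) → sgn ℓ = .pos →
      Entails sgn load store C (.sub (α.app ℓ) (β.app ℓ))
  | sFieldNeg {α β : DTV V L} {ℓ} : Entails sgn load store C (.sub α β) →
      Entails sgn load store C (.var (β.app ℓ)) → sgn ℓ = .neg →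
      Entails sgn load store C (.sub (β.app ℓ) (α.app ℓ))
  | sPointer {α : DTV V L} : Entails sgn load store C (.var (α.app load)) →
      Entails sgn load store C (.var (α.app store)) →
      Entails sgn load store C (.sub (α.app store) (α.app load))

/-- `𝒞` is closed under T-Left, T-Right and T-Prefix. -/
def ClosedTLRP {V L : Type} (C : Set (Constraint V L)) : Prop :=
  (∀ α β : DTV V L, Constraint.sub α β ∈ C →
      Constraint.var α ∈ C ∧ Constraint.var β ∈ C) ∧
  (∀ (α : DTV V L) (ℓ : L), Constraint.var (α.app ℓ) ∈ C →
      Constraint.var α ∈ C)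

/-!
If `X ⊑ Y` is entailed, then `X` and `Y` have the same capabilities: by induction on a capability
word, T-InheritL and T-InheritR transport its first field across the constraint, and S-Field⊕ or
S-Field⊖ then relates the two fields. A derived type variable that a rule application newly
introduces is a field of one side of an entailed subtype constraint whose other side already has
that field, so it has the capability language of an older derived type variable. Hence every
capability language of an entailed derived type variable is already that of one of the finitely
many prefixes of derived type variables occurring in `𝒞`. The left quotients of a capability
language are, apart from `∅`, such languages, so the Myhill–Nerode theorem applies.
-/

section Capability

variable {V L : Type}

namespace DTV

/-- The derived type variable `X.v` for a word `v`, extending `DTV.app` from labels to words. -/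
def append (X : DTV V L) (v : List L) : DTV V L :=
  ⟨X.base, X.word ++ v⟩

theorem append_nil (X : DTV V L) : X.append [] = X := by
  simp only [append, List.append_nil]

theorem append_append (X : DTV V L) (u v : List L) :
    (X.append u).append v = X.append (u ++ v) := by
  simp only [append, List.append_assoc]

theorem app_append (X : DTV V L) (ℓ : L) (v : List L) :
    (X.app ℓ).append v = X.append (ℓ :: v) :=
  X.append_append [ℓ] v

/-- The derived type variables `α.u` with `u` a prefix of `w`, where `X = α.w`. -/
def prefixes (X : DTV V L) : Set (DTV V L) :=
  DTV.mk X.base '' {u | u <+: X.word}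

theorem mem_prefixes_self (X : DTV V L) : X ∈ X.prefixes :=
  ⟨X.word, List.prefix_rfl, rfl⟩

theorem finite_prefixes (X : DTV V L) : X.prefixes.Finite :=
  ((List.finite_toSet X.word.inits).subset fun u => (List.mem_inits u X.word).2).image _

theorem prefixes_app (X : DTV V L) (ℓ : L) :
    (X.app ℓ).prefixes = insert (X.app ℓ) X.prefixes := by
  simp only [prefixes, app, List.prefix_concat_iff, Set.ofPred_or, Set.ofPred_eq_eq_singleton,
    Set.singleton_union, Set.image_insert_eq]

theorem mapsTo_prefixes_app {β : Type*} {f : DTV V L → β} {S : Set β} {X : DTV V L} {ℓ : L} :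
    Set.MapsTo f (X.app ℓ).prefixes S ↔ f (X.app ℓ) ∈ S ∧ Set.MapsTo f X.prefixes S := by
  rw [prefixes_app, Set.insert_eq, Set.mapsTo_union, Set.mapsTo_singleton]

end DTV

namespace Constraint

/-- The prefixes of the derived type variables occurring in a constraint. Taken over all
constraints of `𝒞`, they represent every nonempty capability language. -/
def prefixes : Constraint V L → Set (DTV V L)
  | .var X => X.prefixes
  | .sub X Y => X.prefixes ∪ Y.prefixes

theorem finite_prefixes : (c : Constraint V L) → c.prefixes.Finite
  | .var X => X.finite_prefixes
  | .sub X Y => X.finite_prefixes.union Y.finite_prefixes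

end Constraint

/-- The language of capabilities `{ v : 𝒞 ⊢ VAR X.v }` of a derived type variable `X`. -/
def capabilityLanguage (sgn : L → Sign) (load store : L) (C : Set (Constraint V L))
    (X : DTV V L) : Language L :=
  {v | Entails sgn load store C (.var (X.append v))}

variable {sgn : L → Sign} {load store : L} {C : Set (Constraint V L)} {X Y : DTV V L}

theorem mem_capabilityLanguage {v : List L} :
    v ∈ capabilityLanguage sgn load store C X ↔
      Entails sgn load store C (.var (X.append v)) :=
  Iff.rfl

theorem nil_mem_capabilityLanguage :
    [] ∈ capabilityLanguage sgn load store C X ↔ Entails sgn load store C (.var X) := by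
  rw [mem_capabilityLanguage, X.append_nil]

theorem leftQuotient_capabilityLanguage (X : DTV V L) (u : List L) :
    (capabilityLanguage sgn load store C X).leftQuotient u =
      capabilityLanguage sgn load store C (X.append u) := by
  ext v
  rw [Language.mem_leftQuotient, mem_capabilityLanguage, mem_capabilityLanguage,
    X.append_append]

theorem cons_mem_capabilityLanguage {ℓ : L} {v : List L} :
    ℓ :: v ∈ capabilityLanguage sgn load store C X ↔
      v ∈ capabilityLanguage sgn load store C (X.app ℓ) := by
  rw [mem_capabilityLanguage, mem_capabilityLanguage, X.app_append]

namespace Entails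

theorem var_of_append {v : List L} (h : Entails sgn load store C (.var (X.append v))) :
    Entails sgn load store C (.var X) := by
  induction v generalizing X with
  | nil => rwa [X.append_nil] at h
  | cons ℓ v ih =>
    rw [← X.app_append] at h
    exact (ih h).tPrefix

theorem var_app_iff (h : Entails sgn load store C (.sub X Y)) (ℓ : L) :
    Entails sgn load store C (.var (X.app ℓ)) ↔ Entails sgn load store C (.var (Y.app ℓ)) :=
  ⟨h.tInheritL, h.tInheritR⟩

theorem sub_app_or_sub_app (h : Entails sgn load store C (.sub X Y)) {ℓ : L}
    (hY : Entails sgn load store C (.var (Y.app ℓ))) :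
    Entails sgn load store C (.sub (X.app ℓ) (Y.app ℓ)) ∨
      Entails sgn load store C (.sub (Y.app ℓ) (X.app ℓ)) := by
  cases hℓ : sgn ℓ with
  | pos => exact .inl (h.sFieldPos hY hℓ)
  | neg => exact .inr (h.sFieldNeg hY hℓ)

end Entails

theorem capabilityLanguage_eq_zero (h : ¬ Entails sgn load store C (.var X)) :
    capabilityLanguage sgn load store C X = 0 :=
  Set.eq_empty_of_forall_notMem fun _ hv => h (Entails.var_of_append hv)

theorem Entails.capabilityLanguage_eq (h : Entails sgn load store C (.sub X Y)) :
    capabilityLanguage sgn load store C X = capabilityLanguage sgn load store C Y := by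
  ext v
  induction v generalizing X Y with
  | nil =>
    rw [nil_mem_capabilityLanguage, nil_mem_capabilityLanguage]
    exact iff_of_true h.tLeft h.tRight
  | cons ℓ v ih =>
    rw [cons_mem_capabilityLanguage, cons_mem_capabilityLanguage]
    by_cases hY : Entails sgn load store C (.var (Y.app ℓ))
    · rcases h.sub_app_or_sub_app hY with hXY | hYX
      · exact ih hXY
      · exact (ih hYX).symm
    · have hX : ¬ Entails sgn load store C (.var (X.app ℓ)) := mt (h.var_app_iff ℓ).1 hY
      rw [capabilityLanguage_eq_zero hX, capabilityLanguage_eq_zero hY]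

theorem Entails.capabilityLanguage_app_eq (h : Entails sgn load store C (.sub X Y)) (ℓ : L) :
    capabilityLanguage sgn load store C (X.app ℓ) =
      capabilityLanguage sgn load store C (Y.app ℓ) := by
  ext v
  rw [← cons_mem_capabilityLanguage, ← cons_mem_capabilityLanguage, h.capabilityLanguage_eq]

theorem Entails.mapsTo_prefixes_app_iff (h : Entails sgn load store C (.sub X Y))
    {S : Set (Language L)} {ℓ : L}
    (hS : Set.MapsTo (capabilityLanguage sgn load store C)
      (Constraint.sub X Y).prefixes S) :
    Set.MapsTo (capabilityLanguage sgn load store C) (X.app ℓ).prefixes S ↔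
      Set.MapsTo (capabilityLanguage sgn load store C) (Y.app ℓ).prefixes S := by
  obtain ⟨hX, hY⟩ := Set.mapsTo_union.1 hS
  rw [DTV.mapsTo_prefixes_app, DTV.mapsTo_prefixes_app, h.capabilityLanguage_app_eq]
  exact and_congr_right' (iff_of_true hX hY)

theorem Entails.mapsTo_capabilityLanguage_prefixes {c : Constraint V L}
    (h : Entails sgn load store C c) :
    Set.MapsTo (capabilityLanguage sgn load store C) c.prefixes
      (capabilityLanguage sgn load store C '' ⋃ d ∈ C, d.prefixes) := by
  induction h with
  | ax hc => exact (Set.mapsTo_image _ _).mono_left (Set.subset_biUnion_of_mem hc)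
  | tLeft _ ih => exact (Set.mapsTo_union.1 ih).1
  | tRight _ ih => exact (Set.mapsTo_union.1 ih).2
  | tInheritL h _ ih ihX => exact (h.mapsTo_prefixes_app_iff ih).1 ihX
  | tInheritR h _ ih ihY => exact (h.mapsTo_prefixes_app_iff ih).2 ihY
  | tPrefix _ ih => exact (DTV.mapsTo_prefixes_app.1 ih).2
  | sRefl _ ih => exact ih.union ih
  | sTrans _ _ ihXY ihYZ => exact (Set.mapsTo_union.1 ihXY).1.union (Set.mapsTo_union.1 ihYZ).2
  | sFieldPos h _ _ ih ihY => exact ((h.mapsTo_prefixes_app_iff ih).2 ihY).union ihY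
  | sFieldNeg h _ _ ih ihY => exact ihY.union ((h.mapsTo_prefixes_app_iff ih).2 ihY)
  | sPointer _ _ ihLoad ihStore => exact ihStore.union ihLoad

theorem finite_range_leftQuotient_capabilityLanguage (hC : C.Finite) (X : DTV V L) :
    (Set.range (capabilityLanguage sgn load store C X).leftQuotient).Finite := by
  have finite_languages :
      (capabilityLanguage sgn load store C '' ⋃ d ∈ C, d.prefixes).Finite :=
    (hC.biUnion fun d _ => d.finite_prefixes).image _
  refine (finite_languages.insert 0).subset ?_
  rintro _ ⟨u, rfl⟩
  rw [leftQuotient_capabilityLanguage]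
  by_cases hu : Entails sgn load store C (.var (X.append u))
  · exact .inr (hu.mapsTo_capabilityLanguage_prefixes (X.append u).mem_prefixes_self)
  · exact .inl (capabilityLanguage_eq_zero hu)

theorem capabilityLanguage_prefixClosed_isRegular_general (sgn : L → Sign) (load store : L)
    (C : Set (Constraint V L)) (hC : C.Finite) (X : DTV V L) :
    (∀ u v : List L, u ++ v ∈ capabilityLanguage sgn load store C X →
        u ∈ capabilityLanguage sgn load store C X) ∧
      (capabilityLanguage sgn load store C X).IsRegular := by
  refine ⟨fun u v huv => ?_, ?_⟩
  · rw [mem_capabilityLanguage, ← X.append_append] at huv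
    exact huv.var_of_append
  · exact Language.isRegular_iff_finite_range_leftQuotient.2
      (finite_range_leftQuotient_capabilityLanguage hC X)

end Capability

/-- for a finite constraint set `𝒞` over a finite alphabet `Σ`,
the language `L_τ = { w : 𝒞 ⊢ VAR τ.w }` of capabilities of each base type
variable `τ` is prefix-closed and regular; in particular it is the language of
a sketch (a regular tree over `Σ`). -/
theorem capabilityLanguage_prefixClosed_isRegular {V L : Type} [Fintype L]
    (sgn : L → Sign) (load store : L)
    (hload : sgn load = .pos) (hstore : sgn store = .neg)
    (C : Set (Constraint V L)) (hC : C.Finite) (τ : V) :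
    (∀ u v : List L,
        (u ++ v) ∈ { w : List L | Entails sgn load store C (.var ⟨τ, w⟩) } →
        u ∈ { w : List L | Entails sgn load store C (.var ⟨τ, w⟩) }) ∧
    Language.IsRegular
      ({ w : List L | Entails sgn load store C (.var ⟨τ, w⟩) } : Language L) := by
  exact capabilityLanguage_prefixClosed_isRegular_general sgn load store C hC ⟨τ, []⟩
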